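/- Let A be a finitely generated k-algebra that is an integral domain, Ā its integral closure in a finite field extension of its fraction field, and χ : A → k a character. Then the set of characters χ̃ : Ā → k extending χ is finite and nonempty. -/

import Mathlib

theorem aux_finite
    (k A K L : Type*) [Field k] [CharZero k]
    [CommRing A] [IsDomain A] [Algebra k A] [Algebra.FiniteType k A]
    [Field K] [Algebra A K] [IsFractionRing A K]
    [Field L] [Algebra K L] [Algebra A L] [IsScalarTower A K L] [FiniteDimensional K L] :
    Module.Finite A (integralClosure A L) := by
  obtain ⟨s, g, hinj, hfin⟩ := exists_finite_inj_algHom_of_fg k A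
  let B := MvPolynomial (Fin s) k
  have : IsIntegrallyClosed B := inferInstance
  have : IsNoetherianRing B := inferInstance
  algebraize [g.toRingHom]
  have hBA : Module.Finite B A := hfin
  let F := FractionRing B
  let : Algebra B L := ((algebraMap A L).comp (algebraMap B A)).toAlgebra
  have : IsScalarTower B A L := .of_algebraMap_eq fun _ => rfl
  let : Algebra k L := ((algebraMap B L).comp (algebraMap k B)).toAlgebra
  have : IsScalarTower k B L := .of_algebraMap_eq fun _ => rfl
  have hinjA : Function.Injective (algebraMap A L) := by
    rw [IsScalarTower.algebraMap_eq A K L]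
    exact (algebraMap K L).injective.comp (IsFractionRing.injective A K)
  have : FaithfulSMul B L := (faithfulSMul_iff_algebraMap_injective B L).2 (hinjA.comp hinj)
  have : FaithfulSMul A L := (faithfulSMul_iff_algebraMap_injective A L).2 hinjA
  let : Algebra F L := FractionRing.liftAlgebra B L
  have : IsScalarTower B F L := FractionRing.isScalarTower_liftAlgebra B L
  have e1 : Algebra.EssFiniteType A K := .of_isLocalization _ (nonZeroDivisors A)
  have e2 : Algebra.EssFiniteType A L := .comp A K L
  have e3 : Algebra.EssFiniteType B L := .comp B A L
  have e4 : Algebra.EssFiniteType F L := .of_comp B F L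
  have a0 : Algebra.IsAlgebraic A K := IsLocalization.isAlgebraic K (nonZeroDivisors A)
  have a1 : Algebra.IsAlgebraic A L := .trans A K L
  have a2 : Algebra.IsAlgebraic B L := .trans B A L
  have a3 : Algebra.IsAlgebraic F L := (IsFractionRing.comap_isAlgebraic_iff (A := B)).1 a2
  have f1 : Module.Finite F L := Algebra.finite_of_essFiniteType_of_isAlgebraic
  have : CharZero B := inferInstance
  have : CharZero F := charZero_of_injective_algebraMap (IsFractionRing.injective B F)
  have : Algebra.IsSeparable F L := inferInstance
  have : IsIntegralClosure (integralClosure A L) B L := by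
    refine ⟨Subtype.val_injective, fun {x} => ?_⟩
    constructor
    · intro h
      exact ⟨⟨x, h.tower_top⟩, rfl⟩
    · rintro ⟨y, rfl⟩
      exact isIntegral_trans (R := B) (A := A) _ y.2
  have : Module.Finite B (integralClosure A L) := IsIntegralClosure.finite B F L _
  exact Module.Finite.of_restrictScalars_finite B A _

/-- Let `A` be a finitely generated algebra over an algebraically closed
field `k` of characteristic `0` which is an integral domain, `Ā` its integral closure in a
finite field extension `L` of its fraction field `K`, and `χ : A → k` a character
(`k`-algebra homomorphism). Then the set of characters `χ̃ : Ā → k` extending `χ` is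
finite and nonempty. -/
theorem characters_extending_to_integral_closure_finite_nonempty
    (k A K L : Type*) [Field k] [IsAlgClosed k] [CharZero k]
    [CommRing A] [IsDomain A] [Algebra k A] [Algebra.FiniteType k A]
    [Field K] [Algebra A K] [IsFractionRing A K]
    [Field L] [Algebra K L] [Algebra A L] [IsScalarTower A K L] [FiniteDimensional K L]
    [Algebra k K] [IsScalarTower k A K] [Algebra k L] [IsScalarTower k K L] [IsScalarTower k A L]
    (χ : A →ₐ[k] k) :
    {χt : integralClosure A L →ₐ[k] k |
        ∀ a : A, χt ⟨algebraMap A L a, isIntegral_algebraMap⟩ = χ a}.Finite ∧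
      {χt : integralClosure A L →ₐ[k] k |
        ∀ a : A, χt ⟨algebraMap A L a, isIntegral_algebraMap⟩ = χ a}.Nonempty := by
  have hinjA : Function.Injective (algebraMap A L) := by
    rw [IsScalarTower.algebraMap_eq A K L]
    exact (algebraMap K L).injective.comp (IsFractionRing.injective A K)
  constructor
  · obtain ⟨S, hS⟩ := (aux_finite k A K L).fg_top
    have hint : ∀ x : integralClosure A L, IsIntegral A x := fun x =>
      Algebra.IsIntegral.isIntegral x
    choose p hp hpx using hint
    refine Set.Finite.of_finite_image (f := fun χt (x : S) => χt x.1) ?_ ?_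
    · refine (Set.Finite.pi' (t := fun x : S => {y : k | ((p x.1).map χ.toRingHom).IsRoot y})
        fun x => Polynomial.finite_setOfPred_isRoot ((hp x.1).map _).ne_zero).subset ?_
      rintro _ ⟨χt, h, rfl⟩ x
      have hc : χt.toRingHom.comp (algebraMap A (integralClosure A L)) = χ.toRingHom :=
        RingHom.ext h
      have := congrArg χt.toRingHom (hpx x.1)
      rw [Polynomial.hom_eval₂, hc, map_zero] at this
      simpa [Polynomial.IsRoot, Polynomial.eval_map] using this
    · intro f hf g hg hfg
      ext x
      have hx : x ∈ Submodule.span A (S : Set (integralClosure A L)) := hS ▸ Submodule.mem_top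
      induction hx using Submodule.span_induction with
      | mem x h => exact congrFun hfg ⟨x, h⟩
      | zero => simp
      | add x y _ _ hx hy => simp [hx, hy]
      | smul a x _ hx =>
        have h1 : a • x = ⟨algebraMap A L a, isIntegral_algebraMap⟩ * x := Algebra.smul_def a x
        rw [h1, map_mul, map_mul, hx, hf a, hg a]
  · have hsurj : Function.Surjective χ := fun c => ⟨algebraMap k A c, by simp⟩
    have : (RingHom.ker χ.toRingHom).IsMaximal :=
      RingHom.ker_isMaximal_of_surjective χ.toRingHom hsurj
    obtain ⟨Q, hQ, hQc⟩ := Ideal.exists_ideal_over_maximal_of_isIntegral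
      (S := integralClosure A L) (RingHom.ker χ.toRingHom) (by
        intro a ha
        have : algebraMap A L a = 0 := congrArg Subtype.val ha
        have : a = 0 := hinjA (by simpa using this)
        simp [this])
    let q := Ideal.Quotient.mkₐ k Q
    have hcomp : (algebraMap k (integralClosure A L ⧸ Q)).comp χ.toRingHom =
        q.toRingHom.comp (algebraMap A (integralClosure A L)) := by
      ext a
      have hm : a - algebraMap k A (χ a) ∈ Q.comap (algebraMap A (integralClosure A L)) := by
        rw [hQc]; simp [RingHom.mem_ker]
      have h2 : q (algebraMap A (integralClosure A L) (a - algebraMap k A (χ a))) = 0 :=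
        Ideal.Quotient.eq_zero_iff_mem.2 hm
      rw [map_sub, map_sub, sub_eq_zero, ← IsScalarTower.algebraMap_apply, AlgHom.commutes] at h2
      exact h2.symm
    have hint : (algebraMap k (integralClosure A L ⧸ Q)).IsIntegral := by
      apply RingHom.IsIntegral.tower_top χ.toRingHom
      rw [hcomp]
      apply RingHom.IsIntegral.trans
      · exact fun x => Algebra.IsIntegral.isIntegral x
      · exact RingHom.isIntegral_of_surjective _ Ideal.Quotient.mk_surjective
    have hb := IsAlgClosed.ringHom_bijective_of_isIntegral _ hint
    let e : k ≃ₐ[k] (integralClosure A L ⧸ Q) := AlgEquiv.ofBijective (Algebra.ofId k _) hb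
    refine ⟨e.symm.toAlgHom.comp q, fun a => ?_⟩
    change e.symm (q _) = _
    rw [AlgEquiv.symm_apply_eq]
    exact (RingHom.congr_fun hcomp a).symm
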